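/- Let κ be an uncountable cardinal with κ^{<κ} = κ and let T be a tournament of cardinality κ that is κ-universal (every tournament of cardinality strictly less than κ embeds into T) and κ-ultrahomogeneous (every isomorphism between two subtournaments of T of cardinality strictly less than κ extends to an automorphism of T). Then Aut(T) is not universal: there exists a subset A of the vertices of T such that there is no injective continuous group homomorphism from the automorphism group of the subtournament induced on A into Aut(T). -/

import Mathlib

/-- The topology of pointwise convergence on the permutation group of a set `V`
(regarded as a discrete space): the topology induced from the product topology
on `V → V` where `V` carries the discrete topology. -/
instance permPointwiseTopology (V : Type*) : TopologicalSpace (Equiv.Perm V) :=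
  TopologicalSpace.induced (fun g : Equiv.Perm V => (g : V → V))
    (@Pi.topologicalSpace V (fun _ => V) (fun _ => ⊥))

/-- The automorphism group of a binary relational structure `(V, r)`, realized as the
subgroup of `Equiv.Perm V` of permutations preserving the relation `r` in both directions. -/
def relAut {V : Type*} (r : V → V → Prop) : Subgroup (Equiv.Perm V) where
  carrier := {g : Equiv.Perm V | ∀ x y : V, r (g x) (g y) ↔ r x y}
  one_mem' := fun _ _ => Iff.rfl
  mul_mem' := by
    intro a b ha hb x y
    exact (ha (b x) (b y)).trans (hb x y)
  inv_mem' := by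
    intro a ha x y
    have h := (ha (a⁻¹ x) (a⁻¹ y)).symm
    simpa using h

/-- A tournament: an irreflexive binary relation such that for any two distinct vertices
exactly one of `x → y`, `y → x` holds. -/
def IsTournament {V : Type*} (r : V → V → Prop) : Prop :=
  (∀ x, ¬ r x x) ∧ ∀ x y : V, x ≠ y → Xor' (r x y) (r y x)

open Cardinal in
/-- Countable one-point extension property. -/
theorem ext_property {V : Type u} (r : V → V → Prop) (hT : IsTournament r) (κ : Cardinal.{u})
    (hκ : Cardinal.aleph0 < κ)
    (huniv : ∀ (W : Type u) (s : W → W → Prop), IsTournament s → #W < κ →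
      Nonempty (s ↪r r))
    (hhom : ∀ A B : Set V, #A < κ → #B < κ →
      ∀ f : (fun a b : A => r a b) ≃r (fun a b : B => r a b),
      ∃ g : r ≃r r, ∀ a : A, g (a : V) = (f a : V))
    (C : Set V) (hC : C.Countable) (D : Set V) :
    ∃ v : V, ∀ c ∈ C, (c ∈ D → r v c) ∧ (c ∉ D → r c v) := by
  have hCc : Countable C := hC.to_subtype
  let s : Option C → Option C → Prop := fun a b =>
    match a, b with
    | none, none => False
    | none, some c => (c : V) ∈ D
    | some c, none => (c : V) ∉ D
    | some c, some d => r c d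
  have hs : IsTournament s := by
    constructor
    · rintro (_ | x)
      · exact fun h => h
      · exact hT.1 x
    · rintro (_ | x) (_ | y) hxy
      · exact absurd rfl hxy
      · by_cases h : (y : V) ∈ D
        · exact Or.inl ⟨h, fun h' => h' h⟩
        · exact Or.inr ⟨h, h⟩
      · by_cases h : (x : V) ∈ D
        · exact Or.inr ⟨h, fun h' => h' h⟩
        · exact Or.inl ⟨h, h⟩
      · refine hT.2 x y ?_
        intro h
        exact hxy (congrArg some (Subtype.ext h))
  obtain ⟨φ⟩ := huniv (Option C) s hs (lt_of_le_of_lt (Cardinal.mk_le_aleph0) hκ)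
  let j : C → V := fun c => φ (some c)
  have hj : Function.Injective j := fun a b h => by
    have := φ.injective h
    exact Option.some.inj this
  have hjr : ∀ a b : C, r (j a) (j b) ↔ r a b := fun a b => φ.map_rel_iff (a := some a) (b := some b)
  let E := Equiv.ofInjective j hj
  have hcB : #(Set.range j) < κ :=
    lt_of_le_of_lt (Cardinal.mk_le_aleph0_iff.2 (Set.countable_range j).to_subtype) hκ
  have hcC : #C < κ := lt_of_le_of_lt (Cardinal.mk_le_aleph0) hκ
  let f : (fun a b : Set.range j => r a b) ≃r (fun a b : C => r a b) :=
    RelIso.symm ⟨E, fun {a b} => hjr a b⟩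
  obtain ⟨g, hg⟩ := hhom (Set.range j) C hcB hcC f
  have hgj : ∀ c : C, g (j c) = c := by
    intro c
    have h1 := hg (E c)
    have h2 : f (E c) = c := E.symm_apply_apply c
    rw [h2] at h1
    exact h1
  refine ⟨g (φ none), fun c hc => ⟨fun hD => ?_, fun hD => ?_⟩⟩
  · have h1 : r (φ none) (j ⟨c, hc⟩) := φ.map_rel_iff.2 (show s none (some ⟨c, hc⟩) from hD)
    have h2 := g.map_rel_iff.2 h1
    rwa [hgj] at h2
  · have h1 : r (j ⟨c, hc⟩) (φ none) := φ.map_rel_iff.2 (show s (some ⟨c, hc⟩) none from hD)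
    have h2 := g.map_rel_iff.2 h1
    rwa [hgj] at h2

/-- A permutation all of whose powers are distinct has infinite support. -/
theorem support_infinite {V : Type*} (g : Equiv.Perm V)
    (hg : Function.Injective fun k : ℕ => g ^ k) : {x | g x ≠ x}.Infinite := by
  intro hfin
  have : Finite {x | g x ≠ x} := hfin
  have hmem : ∀ (k : ℕ) (x : {x | g x ≠ x}), (g ^ k) x ∈ {x | g x ≠ x} := by
    intro k x h
    apply x.2
    apply (g ^ k).injective
    rw [← Equiv.Perm.mul_apply, ← pow_succ, pow_succ', Equiv.Perm.mul_apply]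
    exact h
  obtain ⟨i, j, hij, h⟩ := Finite.exists_ne_map_eq_of_infinite
    (fun k : ℕ => fun x : {x | g x ≠ x} => (⟨(g ^ k) x, hmem k x⟩ : {x | g x ≠ x}))
  apply hij
  apply hg
  ext x
  by_cases hx : g x = x
  · rw [Equiv.Perm.pow_apply_eq_self_of_apply_eq_self hx,
      Equiv.Perm.pow_apply_eq_self_of_apply_eq_self hx]
  · exact congrArg Subtype.val (congrFun h ⟨x, hx⟩)

/-- The shift of the `n`-th copy of `ℤ`. -/
def shiftPerm (n : ℕ) : Equiv.Perm (ULift.{u} (ℕ × ℤ)) where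
  toFun a := ⟨(a.down.1, if a.down.1 = n then a.down.2 + 1 else a.down.2)⟩
  invFun a := ⟨(a.down.1, if a.down.1 = n then a.down.2 - 1 else a.down.2)⟩
  left_inv a := by
    rcases a with ⟨m, z⟩
    by_cases h : m = n <;> simp [h]
  right_inv a := by
    rcases a with ⟨m, z⟩
    by_cases h : m = n <;> simp [h]

/-- The lexicographic order relation. -/
def lexRel (a b : ULift.{u} (ℕ × ℤ)) : Prop :=
  a.down.1 < b.down.1 ∨ (a.down.1 = b.down.1 ∧ a.down.2 < b.down.2)

theorem lexRel_tournament : IsTournament lexRel.{u} := by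
  constructor
  · rintro ⟨m, z⟩
    simp [lexRel]
  · rintro ⟨m, z⟩ ⟨m', z'⟩ h
    have h' : ¬ (m = m' ∧ z = z') := by
      rintro ⟨rfl, rfl⟩
      exact h rfl
    change _ ∧ ¬ _ ∨ _ ∧ ¬ _
    simp only [lexRel]
    omega

theorem shift_lexRel (n : ℕ) (a b : ULift.{u} (ℕ × ℤ)) :
    lexRel (shiftPerm n a) (shiftPerm n b) ↔ lexRel a b := by
  rcases a with ⟨m, z⟩
  rcases b with ⟨m', z'⟩
  simp only [lexRel, shiftPerm, Equiv.coe_fn_mk]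
  split_ifs <;> omega

theorem shift_pow (n k : ℕ) :
    ((shiftPerm.{u} n) ^ k) ⟨(n, 0)⟩ = ⟨(n, (k : ℤ))⟩ := by
  induction k with
  | zero => rfl
  | succ k ih =>
    rw [pow_succ', Equiv.Perm.mul_apply, ih]
    simp [shiftPerm]

theorem shift_fix (n : ℕ) (a : ULift.{u} (ℕ × ℤ)) (h : a.down.1 < n) : shiftPerm n a = a := by
  rcases a with ⟨m, z⟩
  have : m ≠ n := ne_of_lt h
  simp [shiftPerm, this]

theorem perm_tendsto_one {A : Type*} (r : A → A → Prop) (t : ℕ → relAut r)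
    (h : ∀ a, ∃ N, ∀ n ≥ N, (t n : Equiv.Perm A) a = a) :
    Filter.Tendsto t Filter.atTop (nhds 1) := by
  letI : TopologicalSpace A := ⊥
  haveI : DiscreteTopology A := ⟨rfl⟩
  rw [tendsto_subtype_rng, nhds_induced, Filter.tendsto_comap_iff, tendsto_pi_nhds]
  intro a
  obtain ⟨N, hN⟩ := h a
  refine tendsto_const_nhds.congr' ?_
  filter_upwards [Filter.eventually_ge_atTop N] with n hn
  exact (hN n hn).symm

theorem perm_stab_nhds {A : Type*} (r : A → A → Prop) (v : A) :
    {g : relAut r | (g : Equiv.Perm A) v = v} ∈ nhds (1 : relAut r) := by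
  letI : TopologicalSpace A := ⊥
  haveI : DiscreteTopology A := ⟨rfl⟩
  have hc : Continuous fun g : relAut r => (g : Equiv.Perm A) v :=
    (continuous_apply v).comp
      ((continuous_induced_dom (f := fun g : Equiv.Perm A => (g : A → A))).comp
        continuous_subtype_val)
  exact (hc.isOpen_preimage {v} (isOpen_discrete _)).mem_nhds rfl

open Cardinal in
/-- Let `κ` be an uncountable cardinal with `κ^{<κ} = κ` and let `T = (V, r)` be a
tournament of cardinality `κ` which is `κ`-universal (every tournament of cardinality `< κ`
embeds into it) and `κ`-ultrahomogeneous (every isomorphism between two subtournaments of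
cardinality `< κ` extends to an automorphism). Then `Aut(T)` is not universal: there is a
set `A` of vertices such that there is no injective continuous group homomorphism from the
automorphism group of the subtournament induced on `A` into `Aut(T)` (both with the
pointwise convergence topology). -/
theorem randomTournamentAut_not_universal
    {V : Type u} (r : V → V → Prop) (hT : IsTournament r) (κ : Cardinal.{u})
    (hκ : Cardinal.aleph0 < κ) (hpow : κ ^< κ = κ)
    (hcard : #V = κ)
    (huniv : ∀ (W : Type u) (s : W → W → Prop), IsTournament s → #W < κ →
      Nonempty (s ↪r r))
    (hhom : ∀ A B : Set V, #A < κ → #B < κ →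
      ∀ f : (fun a b : A => r a b) ≃r (fun a b : B => r a b),
      ∃ g : r ≃r r, ∀ a : A, g (a : V) = (f a : V)) :
    ∃ A : Set V,
      ¬ ∃ e : relAut (fun a b : A => r a b) →* relAut r,
          Function.Injective e ∧ Continuous e := by

  obtain ⟨φ⟩ := huniv _ lexRel.{u} lexRel_tournament (lt_of_le_of_lt Cardinal.mk_le_aleph0 hκ)
  refine ⟨Set.range φ, ?_⟩
  rintro ⟨e, hinj, hcont⟩
  let E := Equiv.ofInjective φ φ.injective
  have hE : ∀ a b, r (E a) (E b) ↔ lexRel a b := fun a b => φ.map_rel_iff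
  let t : ℕ → relAut (fun a b : Set.range φ => r a b) := fun n =>
    ⟨E.permCongr (shiftPerm n), by
      intro x y
      obtain ⟨a, rfl⟩ := E.surjective x
      obtain ⟨b, rfl⟩ := E.surjective y
      simp only [Equiv.permCongr_apply, Equiv.symm_apply_apply]
      rw [hE, hE, shift_lexRel]⟩
  have htE : ∀ n a, (t n : Equiv.Perm (Set.range φ)) (E a) = E (shiftPerm n a) := by
    intro n a
    simp [t, Equiv.permCongr_apply]
  have htpow : ∀ n k a, ((t n : Equiv.Perm (Set.range φ)) ^ k) (E a) = E ((shiftPerm n ^ k) a) := by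
    intro n k a
    induction k with
    | zero => rfl
    | succ k ih => rw [pow_succ', Equiv.Perm.mul_apply, ih, htE, pow_succ', Equiv.Perm.mul_apply]
  have htends : Filter.Tendsto t Filter.atTop (nhds 1) := by
    apply perm_tendsto_one
    intro x
    obtain ⟨a, rfl⟩ := E.surjective x
    refine ⟨a.down.1 + 1, fun n hn => ?_⟩
    rw [htE, shift_fix n a hn]
  have hetends : Filter.Tendsto (fun n => e (t n)) Filter.atTop (nhds 1) := by
    have := (hcont.tendsto 1).comp htends
    rwa [map_one] at this
  let g : ℕ → Equiv.Perm V := fun n => (e (t n) : Equiv.Perm V)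
  have hsupp : ∀ n, {x | g n x ≠ x}.Infinite := by
    intro n
    apply support_infinite
    intro i j hij
    have h1 : e (t n ^ i) = e (t n ^ j) := by
      apply Subtype.ext
      simpa [g] using hij
    have h2 := congrArg (fun q : relAut (fun a b : Set.range φ => r a b) =>
      (q : Equiv.Perm (Set.range φ)) (E ⟨(n, 0)⟩)) (hinj h1)
    simp only [Subgroup.coe_pow, htpow, shift_pow] at h2
    have h3 := E.injective h2
    simpa using h3
  obtain ⟨f, hfP, hfR⟩ := exists_seq_of_forall_finset_exists
    (fun p : ℕ × V => g p.1 p.2 ≠ p.2)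
    (fun p q : ℕ × V => p.1 < q.1 ∧ p.2 ≠ g q.1 q.2 ∧ g p.1 p.2 ≠ q.2) (by
      intro s _
      obtain ⟨N, hN⟩ : ∃ N, ∀ p ∈ s, p.1 < N :=
        ⟨s.sup Prod.fst + 1, fun p hp => Nat.lt_succ_of_le (Finset.le_sup (f := Prod.fst) hp)⟩
      have hfin : (((fun p : ℕ × V => (g N).symm p.2) '' (s : Set (ℕ × V))) ∪
          ((fun p : ℕ × V => g p.1 p.2) '' (s : Set (ℕ × V)))).Finite :=
        (s.finite_toSet.image _).union (s.finite_toSet.image _)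
      obtain ⟨y, hy, hy'⟩ := (hsupp N).exists_notMem_finite hfin
      refine ⟨(N, y), hy, fun p hp => ⟨hN p hp, ?_, ?_⟩⟩
      · intro h
        exact hy' (Or.inl ⟨p, hp, by simp [h]⟩)
      · intro h
        exact hy' (Or.inr ⟨p, hp, h⟩))
  have hdisj : ∀ m n, (f m).2 ≠ g (f n).1 (f n).2 := by
    intro m n
    rcases lt_trichotomy m n with h | h | h
    · exact (hfR m n h).2.1
    · subst h
      exact (hfP m).symm
    · exact ((hfR n m h).2.2).symm
  have hmono : StrictMono fun n => (f n).1 := fun m n h => (hfR m n h).1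
  obtain ⟨v, hv⟩ := ext_property r hT κ hκ huniv hhom
    (Set.range (fun n => (f n).2) ∪ Set.range (fun n => g (f n).1 (f n).2))
    ((Set.countable_range _).union (Set.countable_range _)) (Set.range (fun n => (f n).2))
  have hev := (hetends.comp hmono.tendsto_atTop).eventually (perm_stab_nhds r v)
  obtain ⟨n, hn⟩ := hev.exists
  have hn' : g (f n).1 v = v := hn
  have h1 : r v (f n).2 := (hv _ (Or.inl ⟨n, rfl⟩)).1 ⟨n, rfl⟩
  have h2 : r (g (f n).1 (f n).2) v := by
    refine (hv _ (Or.inr ⟨n, rfl⟩)).2 ?_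
    rintro ⟨m, hm⟩
    exact hdisj m n hm
  have h3 : r v (g (f n).1 (f n).2) := by
    have := ((e (t (f n).1)).2 v (f n).2).2 h1
    change r (g (f n).1 v) (g (f n).1 (f n).2) at this
    rwa [hn'] at this
  rcases hT.2 v (g (f n).1 (f n).2) (fun h => hT.1 v (by rw [← h] at h3; exact h3)) with h | h
  · exact h.2 h2
  · exact h.2 h3
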